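/- Let D be a semisimple x-monotone drawing of K_n and fix t with x_{n−1} < t < x_n. Then the values e_{1n}(t), e_{2n}(t), ..., e_{(n−1)n}(t) are pairwise distinct; whenever e_{an}(t) > e_{bn}(t) for a ≠ b, one has σ_D(a,b,n) = + if a < b and σ_D(b,a,n) = − if b < a. Consequently, for every k with 1 ≤ k ≤ (n−1)/2, the edge with the k-th largest value e_{in}(t) and the edge with the k-th smallest value e_{in}(t) are each (k−1)-edges of D. -/

import Mathlib

/-- `Zval n` is Hill's conjectured value
`Z(n) = (1/4)⌊n/2⌋⌊(n−1)/2⌋⌊(n−2)/2⌋⌊(n−3)/2⌋` for the crossing number of `K n`.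
(The product of the four floors is always divisible by 4, so natural division is exact.) -/
def Zval (n : ℕ) : ℕ :=
  n / 2 * ((n - 1) / 2) * ((n - 2) / 2) * ((n - 3) / 2) / 4

/-- An x-monotone drawing of the complete graph `K n`: vertices `v i = (x i, 0)` with
`x` strictly increasing, and for each pair `i < j` a continuous function `e i j` on
`[x i, x j]` vanishing at the endpoints, whose graph is the arc of the edge `{i, j}`.
Edges avoid the intermediate vertices, any two distinct edges meet in finitely many
interior parameters, and at each such common point the difference changes sign
(a proper crossing). -/
structure XMonotoneDrawing (n : ℕ) where
  x : Fin n → ℝ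
  x_strictMono : StrictMono x
  e : Fin n → Fin n → ℝ → ℝ
  cont : ∀ i j : Fin n, i < j → ContinuousOn (e i j) (Set.Icc (x i) (x j))
  end_left : ∀ i j : Fin n, i < j → e i j (x i) = 0
  end_right : ∀ i j : Fin n, i < j → e i j (x j) = 0
  avoid_vertex : ∀ i m j : Fin n, i < m → m < j → e i j (x m) ≠ 0
  cross_finite : ∀ i j k l : Fin n, i < j → k < l → (i, j) ≠ (k, l) →
    {t : ℝ | max (x i) (x k) < t ∧ t < min (x j) (x l) ∧ e i j t = e k l t}.Finite
  sign_change : ∀ i j k l : Fin n, i < j → k < l → (i, j) ≠ (k, l) →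
    ∀ t : ℝ, max (x i) (x k) < t → t < min (x j) (x l) → e i j t = e k l t →
      ∃ ε > (0 : ℝ), ∀ s : ℝ, max (x i) (x k) < s → t - ε < s → s < t →
        ∀ u : ℝ, u < min (x j) (x l) → t < u → u < t + ε →
          (e i j s - e k l s) * (e i j u - e k l u) < 0

namespace XMonotoneDrawing

variable {n : ℕ}

/-- The set of parameters at which the edges `{i,j}` and `{k,l}` cross
(both edges are parametrized over the `x`-axis). -/
def crossSet (D : XMonotoneDrawing n) (i j k l : Fin n) : Set ℝ :=
  {t : ℝ | max (D.x i) (D.x k) < t ∧ t < min (D.x j) (D.x l) ∧ D.e i j t = D.e k l t}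

/-- The number of crossings between the edges `{i,j}` and `{k,l}`. -/
noncomputable def crossCount (D : XMonotoneDrawing n) (i j k l : Fin n) : ℕ :=
  (D.crossSet i j k l).ncard

/-- Two edges `{i,j}` and `{k,l}` are adjacent if they share an endpoint index. -/
def Adj (i j k l : Fin n) : Prop := i = k ∨ i = l ∨ j = k ∨ j = l

/-- A drawing is semisimple if no two adjacent edges cross. -/
def Semisimple (D : XMonotoneDrawing n) : Prop :=
  ∀ i j k l : Fin n, i < j → k < l → (i, j) ≠ (k, l) → Adj i j k l →
    D.crossCount i j k l = 0

/-- A drawing is weakly semisimple if every two adjacent edges cross an even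
number of times. -/
def WeaklySemisimple (D : XMonotoneDrawing n) : Prop :=
  ∀ i j k l : Fin n, i < j → k < l → (i, j) ≠ (k, l) → Adj i j k l →
    Even (D.crossCount i j k l)

/-- A drawing is simple if no two adjacent edges cross and every two non-adjacent
edges cross at most once. -/
def Simple (D : XMonotoneDrawing n) : Prop :=
  ∀ i j k l : Fin n, i < j → k < l → (i, j) ≠ (k, l) →
    (Adj i j k l → D.crossCount i j k l = 0) ∧
    (¬ Adj i j k l → D.crossCount i j k l ≤ 1)

/-- `cr D`: the total number of crossings of `D`. (Each unordered pair of distinct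
edges is counted twice in the sum, whence the division by 2; `crossCount` is
symmetric in the two edges.) -/
noncomputable def cr (D : XMonotoneDrawing n) : ℕ :=
  (∑ p : (Fin n × Fin n) × (Fin n × Fin n),
      if p.1.1 < p.1.2 ∧ p.2.1 < p.2.2 ∧ p.1 ≠ p.2 then
        D.crossCount p.1.1 p.1.2 p.2.1 p.2.2
      else 0) / 2

/-- `ocr D`: the number of unordered pairs of edges of `D` crossing an odd number
of times. (Each unordered pair appears twice as an ordered pair.) -/
noncomputable def ocr (D : XMonotoneDrawing n) : ℕ :=
  {p : (Fin n × Fin n) × (Fin n × Fin n) |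
    p.1.1 < p.1.2 ∧ p.2.1 < p.2.2 ∧ p.1 ≠ p.2 ∧
      Odd (D.crossCount p.1.1 p.1.2 p.2.1 p.2.2)}.ncard / 2

/-- The signature of the triple `i < j < k`: `true` (i.e. `+`) if the vertex `v j`
lies below the edge `{i, k}`, i.e. `e i k (x j) > 0`, and `false` (i.e. `−`) otherwise. -/
noncomputable def sig (D : XMonotoneDrawing n) (i j k : Fin n) : Bool :=
  if 0 < D.e i k (D.x j) then true else false

/-- `D` realizes the signature function `σ` if `σ_D` and `σ` agree on all
increasing triples. -/
def Realizes (D : XMonotoneDrawing n) (σ : Fin n → Fin n → Fin n → Bool) : Prop :=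
  ∀ i j k : Fin n, i < j → j < k → D.sig i j k = σ i j k

/-- A drawing is pseudolinear if its edges extend to continuous curves over all of `ℝ`
that avoid all vertices other than their endpoints and such that any two of these
extended curves cross exactly once (the crossing being a sign change of the difference). -/
def Pseudolinear (D : XMonotoneDrawing n) : Prop :=
  ∃ p : Fin n → Fin n → ℝ → ℝ,
    (∀ i j : Fin n, i < j → Continuous (p i j)) ∧
    (∀ i j : Fin n, i < j → ∀ t ∈ Set.Icc (D.x i) (D.x j), p i j t = D.e i j t) ∧
    (∀ i j m : Fin n, i < j → m ≠ i → m ≠ j → p i j (D.x m) ≠ 0) ∧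
    (∀ i j k l : Fin n, i < j → k < l → (i, j) ≠ (k, l) →
      ∃ t : ℝ, p i j t = p k l t ∧
        ∀ s u : ℝ, s < t → t < u →
          (p i j s - p k l s) * (p i j u - p k l u) < 0)

/-- The arc of the edge `{i, j}` as a subset of the plane `ℝ × ℝ`. -/
def edgeArc (D : XMonotoneDrawing n) (i j : Fin n) : Set (ℝ × ℝ) :=
  {q : ℝ × ℝ | D.x i ≤ q.1 ∧ q.1 ≤ D.x j ∧ q.2 = D.e i j q.1}

/-- The union of all edge arcs of the drawing. -/
def arcUnion (D : XMonotoneDrawing n) : Set (ℝ × ℝ) :=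
  ⋃ i : Fin n, ⋃ j : Fin n, ⋃ (_ : i < j), D.edgeArc i j

end XMonotoneDrawing

namespace Sig

variable {n : ℕ}

/-- With respect to a signature function `σ`, the vertex `m ∉ {i, j}` is on the left of
the directed edge `(i, j)` (where `i < j`). -/
def LeftOf (σ : Fin n → Fin n → Fin n → Bool) (i j m : Fin n) : Prop :=
  (i < m ∧ m < j ∧ σ i m j = false) ∨ (m < i ∧ σ m i j = true) ∨ (j < m ∧ σ i j m = true)

/-- The number of vertices on the left of the directed edge `(i, j)`. -/
noncomputable def leftCount (σ : Fin n → Fin n → Fin n → Bool) (i j : Fin n) : ℕ :=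
  {m : Fin n | LeftOf σ i j m}.ncard

/-- The edge `{i, j}` (with `i < j`) is a `k`-edge of `σ` if `min(ℓ, n − 2 − ℓ) = k`,
where `ℓ` is the number of vertices on its left. -/
def IsKEdge (σ : Fin n → Fin n → Fin n → Bool) (k : ℕ) (i j : Fin n) : Prop :=
  min (leftCount σ i j) (n - 2 - leftCount σ i j) = k

/-- `Ek σ k`: the number of `k`-edges of `σ`. -/
noncomputable def Ek (σ : Fin n → Fin n → Fin n → Bool) (k : ℕ) : ℕ :=
  {p : Fin n × Fin n | p.1 < p.2 ∧ IsKEdge σ k p.1 p.2}.ncard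

/-- `Ele σ k = E_{≤k}(σ)`: the number of `≤k`-edges of `σ`. -/
noncomputable def Ele (σ : Fin n → Fin n → Fin n → Bool) (k : ℕ) : ℕ :=
  ∑ i ∈ Finset.range (k + 1), Ek σ i

/-- `Elele σ k = E_{≤≤k}(σ) = Σ_{j=0}^{k} E_{≤j}(σ)`. -/
noncomputable def Elele (σ : Fin n → Fin n → Fin n → Bool) (k : ℕ) : ℕ :=
  ∑ j ∈ Finset.range (k + 1), Ele σ j

/-- `E_{≤≤k}` with an integer index, which vanishes for negative `k`. -/
noncomputable def ElelZ (σ : Fin n → Fin n → Fin n → Bool) (k : ℤ) : ℕ :=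
  if 0 ≤ k then Elele σ k.toNat else 0

/-- The left count of the edge `{i, j}` in the drawing restricted to the first
`n − 1` vertices (the last vertex deleted). -/
noncomputable def leftCountRes (σ : Fin n → Fin n → Fin n → Bool) (i j : Fin n) : ℕ :=
  {m : Fin n | LeftOf σ i j m ∧ (m : ℕ) + 1 < n}.ncard

/-- The edge `{i, j}` is a `k`-edge of the restriction of `σ` to the first `n − 1`
vertices (there `min(ℓ', (n−1) − 2 − ℓ') = k`). -/
def IsKEdgeRes (σ : Fin n → Fin n → Fin n → Bool) (k : ℕ) (i j : Fin n) : Prop :=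
  min (leftCountRes σ i j) (n - 3 - leftCountRes σ i j) = k

/-- The edge `{i, j}` is a `(D,D')`-invariant `≤k`-edge: it avoids the last vertex and
is an `m`-edge with `m ≤ k` both in `σ` and in the restriction of `σ` to the first
`n − 1` vertices. -/
def InvariantLeK (σ : Fin n → Fin n → Fin n → Bool) (k : ℕ) (i j : Fin n) : Prop :=
  (j : ℕ) + 1 < n ∧ (∃ m ≤ k, IsKEdge σ m i j) ∧ (∃ m ≤ k, IsKEdgeRes σ m i j)

/-- The ten 4-tuple forms allowed in signature functions of semisimple x-monotone
drawings: `++++, −−−−, ++−−, −−++, −++−, +−−+, −−−+, +++−, +−−−, −+++`. -/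
def AllowedForm (a b c d : Bool) : Prop :=
  (a, b, c, d) ∈ ([(true, true, true, true), (false, false, false, false),
    (true, true, false, false), (false, false, true, true),
    (false, true, true, false), (true, false, false, true),
    (false, false, false, true), (true, true, true, false),
    (true, false, false, false), (false, true, true, true)] :
      List (Bool × Bool × Bool × Bool))

/-- A signature function is admissible if every increasing 4-tuple is of one of the
ten allowed forms. -/
def Admissible (σ : Fin n → Fin n → Fin n → Bool) : Prop :=
  ∀ a b c d : Fin n, a < b → b < c → c < d →
    AllowedForm (σ a b c) (σ a b d) (σ a c d) (σ b c d)

/-- The six convex forms: `++++, −−−−, ++−−, −−++, −++−, +−−+`. -/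
def ConvexForm (a b c d : Bool) : Prop :=
  (a, b, c, d) ∈ ([(true, true, true, true), (false, false, false, false),
    (true, true, false, false), (false, false, true, true),
    (false, true, true, false), (true, false, false, true)] :
      List (Bool × Bool × Bool × Bool))

/-- The 4-tuple `a < b < c < d` is convex in `σ`. -/
def Convex4 (σ : Fin n → Fin n → Fin n → Bool) (a b c d : Fin n) : Prop :=
  ConvexForm (σ a b c) (σ a b d) (σ a c d) (σ b c d)

/-- The eight 4-tuple forms of pseudolinear x-monotone drawings (the sign-monotone
sequences): `++++, +++−, ++−−, +−−−, −−−−, −−−+, −−++, −+++`. -/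
def PLForm (a b c d : Bool) : Prop :=
  (a, b, c, d) ∈ ([(true, true, true, true), (true, true, true, false),
    (true, true, false, false), (true, false, false, false),
    (false, false, false, false), (false, false, false, true),
    (false, false, true, true), (false, true, true, true)] :
      List (Bool × Bool × Bool × Bool))

/-- The relation `j ⋖ k` on `{j : i < j}`: `j ⋖ k` iff (`j < k` and `σ i j k = +`)
or (`k < j` and `σ i k j = −`). -/
def Below (σ : Fin n → Fin n → Fin n → Bool) (i j k : Fin n) : Prop :=
  (j < k ∧ σ i j k = true) ∨ (k < j ∧ σ i k j = false)

end Sig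

/-!
Two edges with a common right endpoint `c` do not cross, so their vertical order is constant from
the right one of their two left endpoints up to `c`. Comparing at that left endpoint, where one of
the edges has height `0`, the order is read off the signature. Hence a vertex preceding `c` is on
the left of the directed edge `(a, c)` exactly when its edge to `c` runs above that of `a`. When `c`
is the last vertex, the left count of `(a, c)` is therefore the number of edges at `c` above
`{a, c}`, and the other edges at `c` lie below.
-/

section Order

variable {α β : Type*} [LinearOrder β]

lemma lt_iff_lt_of_isPreconnected_of_forall_ne [TopologicalSpace α] [TopologicalSpace β]
    [OrderClosedTopology β] {s : Set α} (hs : IsPreconnected s) {f g : α → β}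
    (hf : ContinuousOn f s) (hg : ContinuousOn g s) (hne : ∀ x ∈ s, f x ≠ g x) {x y : α}
    (hx : x ∈ s) (hy : y ∈ s) : f x < g x ↔ f y < g y := by
  have transfer {u v : α} (hu : u ∈ s) (hv : v ∈ s) (h : f u < g u) : f v < g v := by
    by_contra! hle
    obtain ⟨w, hw, hfg⟩ := hs.intermediate_value₂ hu hv hf hg h.le hle
    exact hne w hw hfg
  exact ⟨transfer hx hy, transfer hy hx⟩

lemma ncard_sep_lt_add_ncard_sep_gt_add_one {f : α → β} {s : Set α} (hs : s.Finite)
    (hf : s.InjOn f) {a : α} (ha : a ∈ s) :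
    {b ∈ s | f a < f b}.ncard + {b ∈ s | f b < f a}.ncard + 1 = s.ncard := by
  have hdisj : Disjoint {b ∈ s | f a < f b} {b ∈ s | f b < f a} :=
    Set.disjoint_left.2 fun _ h h' => h.2.asymm h'.2
  have hunion : {b ∈ s | f a < f b} ∪ {b ∈ s | f b < f a} = s \ {a} := by
    ext b
    constructor
    · rintro (⟨hb, h⟩ | ⟨hb, h⟩)
      · exact ⟨hb, ne_of_apply_ne f h.ne'⟩
      · exact ⟨hb, ne_of_apply_ne f h.ne⟩
    · rintro ⟨hb, hba⟩
      exact (hf.ne ha hb (Ne.symm hba)).lt_or_gt.imp (⟨hb, ·⟩) (⟨hb, ·⟩)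
  rw [← Set.ncard_union_eq hdisj (hs.sep _) (hs.sep _), hunion,
    Set.ncard_sdiff_singleton_add_one ha hs]

end Order

lemma Sig.IsKEdge.of_leftCount {n k : ℕ} {σ : Fin n → Fin n → Fin n → Bool} {i j : Fin n}
    (hk : 2 * k + 2 ≤ n) (h : leftCount σ i j = k ∨ leftCount σ i j + k + 2 = n) :
    IsKEdge σ k i j := by
  unfold IsKEdge
  omega

namespace XMonotoneDrawing

section

variable {n : ℕ} {D : XMonotoneDrawing n} {a b c : Fin n} {t : ℝ}

lemma sig_eq_true_iff : D.sig a b c = true ↔ 0 < D.e a c (D.x b) := by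
  simp [sig]

lemma Semisimple.e_ne_e_of_adj (hD : D.Semisimple) {i j k l : Fin n} (hij : i < j) (hkl : k < l)
    (hne : (i, j) ≠ (k, l)) (hadj : Adj i j k l) (hleft : max (D.x i) (D.x k) < t)
    (hright : t < min (D.x j) (D.x l)) : D.e i j t ≠ D.e k l t := by
  intro h
  have hcard : (D.crossSet i j k l).ncard = 0 := hD i j k l hij hkl hne hadj
  have hempty : D.crossSet i j k l = ∅ :=
    (Set.ncard_eq_zero (D.cross_finite i j k l hij hkl hne)).1 hcard
  exact Set.eq_empty_iff_forall_notMem.1 hempty t ⟨hleft, hright, h⟩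

lemma Semisimple.e_ne_e_of_lt (hD : D.Semisimple) (hab : a < b) (hbt : D.x b ≤ t)
    (htc : t < D.x c) : D.e a c t ≠ D.e b c t := by
  have hbc : b < c := D.x_strictMono.lt_iff_lt.1 (hbt.trans_lt htc)
  rcases hbt.eq_or_lt with rfl | hbt
  · rw [D.end_left b c hbc]
    exact D.avoid_vertex a b c hab hbc
  · have hne : (a, c) ≠ (b, c) := fun h => hab.ne (congrArg Prod.fst h)
    exact hD.e_ne_e_of_adj (hab.trans hbc) hbc hne (by simp [Adj])
      (max_lt ((D.x_strictMono hab).trans hbt) hbt) (lt_min htc htc)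

lemma Semisimple.injOn_e (hD : D.Semisimple) (htc : t < D.x c) :
    {a | D.x a ≤ t}.InjOn fun a => D.e a c t := by
  intro a hat b hbt h
  by_contra hab
  rcases lt_or_gt_of_ne hab with hab | hba
  · exact hD.e_ne_e_of_lt hab hbt htc h
  · exact hD.e_ne_e_of_lt hba hat htc h.symm

lemma Semisimple.sig_eq_true_iff_lt (hD : D.Semisimple) (hab : a < b) (hbt : D.x b ≤ t)
    (htc : t < D.x c) : D.sig a b c = true ↔ D.e b c t < D.e a c t := by
  have hbc : b < c := D.x_strictMono.lt_iff_lt.1 (hbt.trans_lt htc)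
  have hsubb : Set.Icc (D.x b) t ⊆ Set.Icc (D.x b) (D.x c) := Set.Icc_subset_Icc_right htc.le
  have hsuba : Set.Icc (D.x b) t ⊆ Set.Icc (D.x a) (D.x c) :=
    Set.Icc_subset_Icc (D.x_strictMono hab).le htc.le
  calc D.sig a b c = true ↔ D.e b c (D.x b) < D.e a c (D.x b) := by
        rw [sig_eq_true_iff, D.end_left b c hbc]
    _ ↔ D.e b c t < D.e a c t :=
        lt_iff_lt_of_isPreconnected_of_forall_ne isPreconnected_Icc
          ((D.cont b c hbc).mono hsubb) ((D.cont a c (hab.trans hbc)).mono hsuba)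
          (fun s hs => (hD.e_ne_e_of_lt hab hs.1 (hs.2.trans_lt htc)).symm)
          (Set.left_mem_Icc.2 hbt) (Set.right_mem_Icc.2 hbt)

lemma Semisimple.sig_eq_false_iff_lt (hD : D.Semisimple) (hab : a < b) (hbt : D.x b ≤ t)
    (htc : t < D.x c) : D.sig a b c = false ↔ D.e a c t < D.e b c t := by
  rw [← Bool.not_eq_true, hD.sig_eq_true_iff_lt hab hbt htc, not_lt]
  exact (hD.e_ne_e_of_lt hab hbt htc).le_iff_lt

lemma Semisimple.leftOf_sig_iff_lt (hD : D.Semisimple) (hat : D.x a ≤ t) (hbt : D.x b ≤ t)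
    (htc : t < D.x c) : Sig.LeftOf D.sig a c b ↔ D.e a c t < D.e b c t := by
  have hbc : b < c := D.x_strictMono.lt_iff_lt.1 (hbt.trans_lt htc)
  rcases lt_trichotomy a b with hab | rfl | hba
  · simp [Sig.LeftOf, hab, hab.not_gt, hbc, hbc.not_gt, hD.sig_eq_false_iff_lt hab hbt htc]
  · simp [Sig.LeftOf, hbc.not_gt]
  · simp [Sig.LeftOf, hba, hba.not_gt, hbc.not_gt, hD.sig_eq_true_iff_lt hba hat htc]

end

section LastVertex

variable {n : ℕ} {D : XMonotoneDrawing (n + 1)} {a : Fin (n + 1)} {t : ℝ}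

lemma Semisimple.leftCount_last (hD : D.Semisimple) (htlast : t < D.x (Fin.last n))
    (hle : ∀ m ≠ Fin.last n, D.x m ≤ t) (ha : a ≠ Fin.last n) :
    Sig.leftCount D.sig a (Fin.last n) =
      {b | b ≠ Fin.last n ∧ D.e a (Fin.last n) t < D.e b (Fin.last n) t}.ncard := by
  rw [Sig.leftCount]
  congr 1
  ext b
  by_cases hb : b = Fin.last n
  · simp [hb, Sig.LeftOf, (Fin.le_last a).not_gt]
  · simp [hb, hD.leftOf_sig_iff_lt (hle a ha) (hle b hb) htlast]

lemma Semisimple.leftCount_last_add_ncard_lt_add_one (hD : D.Semisimple)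
    (htlast : t < D.x (Fin.last n)) (hle : ∀ m ≠ Fin.last n, D.x m ≤ t) (ha : a ≠ Fin.last n) :
    Sig.leftCount D.sig a (Fin.last n) +
      {b | b ≠ Fin.last n ∧ D.e b (Fin.last n) t < D.e a (Fin.last n) t}.ncard + 1 = n := by
  have hinj : ({Fin.last n}ᶜ : Set (Fin (n + 1))).InjOn fun b => D.e b (Fin.last n) t :=
    (hD.injOn_e htlast).mono hle
  have hcard : ({Fin.last n}ᶜ : Set (Fin (n + 1))).ncard = n :=
    Set.ncard_compl_of_ncard_eq_add _ (by simp)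
  rw [hD.leftCount_last htlast hle ha]
  exact (ncard_sep_lt_add_ncard_sep_gt_add_one (Set.toFinite _) hinj ha).trans hcard

end LastVertex

end XMonotoneDrawing

/-- Let `D` be a semisimple x-monotone drawing of `K (n+1)` and fix `t`
strictly between the `x`-coordinate of the second-to-last vertex and that of the last
vertex. Then the values `e a last t` (over `a ≠ last`) are pairwise distinct; whenever
`e a last t > e b last t` for `a ≠ b`, one has `σ_D a b last = +` if `a < b` and
`σ_D b a last = −` if `b < a`; and for every `k` with `1 ≤ k ≤ n/2` the edge with the
`k`-th largest value and the edge with the `k`-th smallest value are `(k−1)`-edges. -/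
theorem edges_at_last_vertex_k_edges (n : ℕ) (D : XMonotoneDrawing (n + 1))
    (hD : D.Semisimple) (t : ℝ) (ht₂ : t < D.x (Fin.last n))
    (ht₁ : ∀ m : Fin (n + 1), m ≠ Fin.last n → D.x m < t) :
    (∀ a b : Fin (n + 1), a ≠ Fin.last n → b ≠ Fin.last n → a ≠ b →
      D.e a (Fin.last n) t ≠ D.e b (Fin.last n) t) ∧
    (∀ a b : Fin (n + 1), a ≠ Fin.last n → b ≠ Fin.last n → a ≠ b →
      D.e b (Fin.last n) t < D.e a (Fin.last n) t →
      (a < b → D.sig a b (Fin.last n) = true) ∧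
      (b < a → D.sig b a (Fin.last n) = false)) ∧
    (∀ k : ℕ, 1 ≤ k → 2 * k ≤ n → ∀ a : Fin (n + 1), a ≠ Fin.last n →
      ({b : Fin (n + 1) | b ≠ Fin.last n ∧ b ≠ a ∧
          D.e a (Fin.last n) t < D.e b (Fin.last n) t}.ncard = k - 1 ∨
        {b : Fin (n + 1) | b ≠ Fin.last n ∧ b ≠ a ∧
          D.e b (Fin.last n) t < D.e a (Fin.last n) t}.ncard = k - 1) →
      Sig.IsKEdge D.sig (k - 1) a (Fin.last n)) := by
  have hle (m : Fin (n + 1)) (hm : m ≠ Fin.last n) : D.x m ≤ t := (ht₁ m hm).le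
  refine ⟨fun a b ha hb hab => (hD.injOn_e ht₂).ne (hle a ha) (hle b hb) hab,
    fun a b ha hb _ h => ⟨fun hab => (hD.sig_eq_true_iff_lt hab (hle b hb) ht₂).2 h,
      fun hba => (hD.sig_eq_false_iff_lt hba (hle a ha) ht₂).2 h⟩,
    fun k hk hkn a ha hrank => ?_⟩
  have habove (b : Fin (n + 1)) : (b ≠ a ∧ D.e a (Fin.last n) t < D.e b (Fin.last n) t) ↔
      D.e a (Fin.last n) t < D.e b (Fin.last n) t :=
    and_iff_right_of_imp fun h => ne_of_apply_ne (D.e · (Fin.last n) t) h.ne'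
  have hbelow (b : Fin (n + 1)) : (b ≠ a ∧ D.e b (Fin.last n) t < D.e a (Fin.last n) t) ↔
      D.e b (Fin.last n) t < D.e a (Fin.last n) t :=
    and_iff_right_of_imp fun h => ne_of_apply_ne (D.e · (Fin.last n) t) h.ne
  simp only [habove, hbelow] at hrank
  have hleft := hD.leftCount_last ht₂ hle ha
  have hsum := hD.leftCount_last_add_ncard_lt_add_one ht₂ hle ha
  exact Sig.IsKEdge.of_leftCount (by omega) (by omega)
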